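/- Let q be a homogeneous polynomial of degree n in n real variables with nonnegative coefficients, normalized so that q(1,...,1) = 1. Then q is doubly stochastic (i.e., (∂q/∂xᵢ)(1,...,1) = 1 for all i) if and only if q(x₁,...,xₙ) ≥ ∏ᵢ xᵢ for all vectors (x₁,...,xₙ) with positive real coordinates. -/

import Mathlib

open MvPolynomial

lemma aux_pderiv (n : ℕ) (q : MvPolynomial (Fin n) ℝ) (i : Fin n) :
    eval (fun _ => (1 : ℝ)) (pderiv i q) = ∑ m ∈ q.support, q.coeff m * (m i : ℝ) := by
  conv_lhs => rw [q.as_sum]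
  rw [map_sum, map_sum]
  refine Finset.sum_congr rfl fun m _ => ?_
  rw [pderiv_monomial, eval_monomial]
  simp [Finsupp.prod]

theorem stmt4 (n : ℕ) (hn : 0 < n) (q : MvPolynomial (Fin n) ℝ)
    (hq : q.IsHomogeneous n) (hcoeff : ∀ m, 0 ≤ q.coeff m)
    (hone : eval (fun _ => (1 : ℝ)) q = 1) :
    (∀ i, eval (fun _ => (1 : ℝ)) (pderiv i q) = 1) ↔
      ∀ x : Fin n → ℝ, (∀ i, 0 < x i) → (∏ i, x i) ≤ eval x q := by
  have hsum : ∑ m ∈ q.support, q.coeff m = 1 := by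
    rw [eval_eq'] at hone
    simpa using hone
  constructor
  · intro h x hx
    have key := Real.geom_mean_le_arith_mean_weighted q.support (fun m => q.coeff m)
      (fun m => ∏ i, x i ^ m i) (fun m _ => hcoeff m) hsum
      (fun m _ => Finset.prod_nonneg fun i _ => pow_nonneg (hx i).le _)
    rw [eval_eq']
    refine le_trans (le_of_eq ?_) key
    have h1 : ∀ m ∈ q.support, (∏ i, x i ^ m i) ^ (q.coeff m)
        = ∏ i, x i ^ (q.coeff m * (m i : ℝ)) := by
      intro m _
      rw [← Real.finsetProd_rpow _ _ (fun i _ => pow_nonneg (hx i).le _)]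
      refine Finset.prod_congr rfl fun i _ => ?_
      rw [mul_comm, Real.rpow_mul (hx i).le, Real.rpow_natCast]
    rw [Finset.prod_congr rfl h1, Finset.prod_comm]
    refine Finset.prod_congr rfl fun i _ => ?_
    rw [← Real.rpow_sum_of_pos (hx i), ← aux_pderiv, h i, Real.rpow_one]
  · intro h i
    rw [aux_pderiv]
    let f : ℝ → ℝ := fun s => (∑ m ∈ q.support, q.coeff m * s ^ m i) - s
    have hd : HasDerivAt f ((∑ m ∈ q.support, q.coeff m * ((m i : ℝ) * 1 ^ (m i - 1))) - 1) 1 := by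
      refine HasDerivAt.sub ?_ (hasDerivAt_id _)
      exact HasDerivAt.fun_sum fun m _ => (hasDerivAt_pow (m i) (1 : ℝ)).const_mul _
    have hmin : IsLocalMin f 1 := by
      filter_upwards [lt_mem_nhds (zero_lt_one : (0 : ℝ) < 1)] with s hs
      have h2 := h (Function.update (fun _ => 1) i s) (by
        intro j
        by_cases hj : j = i
        · subst hj; simpa using hs
        · simp [hj])
      have e : ∀ m : Fin n →₀ ℕ,
          ∏ j, (Function.update (fun _ => (1 : ℝ)) i s j) ^ m j = s ^ m i := by
        intro m
        rw [Finset.prod_eq_single i]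
        · simp
        · intro j _ hj
          simp [hj]
        · simp
      rw [eval_eq', Finset.prod_update_of_mem (Finset.mem_univ i)] at h2
      simp only [e] at h2
      simp only [Finset.prod_const_one, mul_one] at h2
      simp only [f, one_pow, mul_one, hsum]
      linarith
    have := hmin.hasDerivAt_eq_zero hd
    simp only [one_pow, mul_one] at this
    linarith
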